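/- Let m ≥ k ≥ 2 be integers. If a finite k-uniform hypergraph H with at least one edge has property T_k(m), then the Radon number of its associated convexity space satisfies r(X, C)_H ≤ binom(m, k) · 2^k; that is, every subset of X of size binom(m, k) · 2^k admits a Radon partition. -/

import Mathlib

open scoped Classical

universe u

section SetSystems

variable {X : Type*}

/-- A finite family of sets is intersecting if all of its members have a common element. -/
def IsIntersecting (F : Finset (Set X)) : Prop :=
  ∃ x, ∀ K ∈ F, x ∈ K

/-- A convexity space: `∅` and the whole space are convex, convexity is closed under
arbitrary (nonempty) intersections and under unions of (nonempty) chains. -/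
def IsConvexitySpace (C : Set (Set X)) : Prop :=
  ∅ ∈ C ∧ Set.univ ∈ C ∧
    (∀ D ⊆ C, D.Nonempty → ⋂₀ D ∈ C) ∧
    (∀ D ⊆ C, D.Nonempty → IsChain (· ⊆ ·) D → ⋃₀ D ∈ C)

/-- The convex hull of `Y`: intersection of all convex sets containing `Y`. -/
def convHull (C : Set (Set X)) (Y : Set X) : Set X :=
  ⋂₀ {K | K ∈ C ∧ Y ⊆ K}

/-- `Y` admits a Radon partition: a partition into two disjoint parts whose hulls meet. -/
def HasRadonPartition (C : Set (Set X)) (Y : Finset X) : Prop :=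
  ∃ A B : Finset X, (↑A ∪ ↑B : Set X) = ↑Y ∧ Disjoint (↑A : Set X) (↑B : Set X) ∧
    (convHull C ↑A ∩ convHull C ↑B).Nonempty

/-- The Radon number is at most `n`: every finite subset of size at least `n`
admits a Radon partition. -/
def RadonLE (C : Set (Set X)) (n : ℕ) : Prop :=
  ∀ Y : Finset X, n ≤ Y.card → HasRadonPartition C Y

/-- `Y` admits a Tverberg `k`-partition: a partition into `k` pairwise disjoint parts
whose hulls have a common point. -/
def HasTverbergPartition (C : Set (Set X)) (k : ℕ) (Y : Finset X) : Prop :=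
  ∃ P : Fin k → Finset X, (⋃ i, (↑(P i) : Set X)) = ↑Y ∧
    (∀ i j, i ≠ j → Disjoint (↑(P i) : Set X) (↑(P j) : Set X)) ∧
    (⋂ i, convHull C ↑(P i)).Nonempty

/-- A minimally non-intersecting family: not intersecting, but every proper subfamily
obtained by deleting one member is intersecting. -/
def MinNonIntersecting (F : Finset (Set X)) : Prop :=
  ¬ IsIntersecting F ∧ ∀ K ∈ F, IsIntersecting (F.erase K)

/-- The Helly number of the set system `S` is at most `n`. -/
def HellyLE (S : Set (Set X)) (n : ℕ) : Prop :=
  ∀ F : Finset (Set X), ↑F ⊆ S → MinNonIntersecting F → F.card ≤ n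

/-- The colorful Helly number of the set system `S` is at most `m`. -/
def ColorfulHellyLE (S : Set (Set X)) (m : ℕ) : Prop :=
  ∀ F : Fin m → Finset (Set X), (∀ i, ↑(F i) ⊆ S) →
    (∀ K : Fin m → Set X, (∀ i, K i ∈ F i) → (⋂ i, K i).Nonempty) →
    ∃ i, IsIntersecting (F i)

/-- `S` satisfies the fractional Helly property for `k`-tuples with function `β`. -/
def FracHelly (S : Set (Set X)) (k : ℕ) (β : ℝ → ℝ) : Prop :=
  ∀ α ∈ Set.Ioo (0 : ℝ) 1, ∀ F : Finset (Set X), ↑F ⊆ S →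
    α * (F.card.choose k : ℝ) ≤
      (((F.powersetCard k).filter (fun G => IsIntersecting G)).card : ℝ) →
    ∃ G ⊆ F, IsIntersecting G ∧ β α * (F.card : ℝ) ≤ (G.card : ℝ)

/-- The transversal number of the finite family `F` is at most `n`: `F` can be
partitioned into (at most) `n` intersecting subfamilies. -/
def TransversalLE (F : Finset (Set X)) (n : ℕ) : Prop :=
  ∃ P : Fin n → Finset (Set X), (∀ i, P i ⊆ F) ∧ (∀ K ∈ F, ∃! i, K ∈ P i) ∧
    ∀ i, (P i).Nonempty → IsIntersecting (P i)

/-- The fractional transversal number of `F` is at most `t`: there is a finitely supported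
fractional transversal of total weight at most `t`. -/
def FracTransversalLE (F : Finset (Set X)) (t : ℝ) : Prop :=
  ∃ f : X →₀ ℝ, (∀ x, 0 ≤ f x ∧ f x ≤ 1) ∧
    (∀ S ∈ F, 1 ≤ ∑ x ∈ f.support.filter (fun x => x ∈ S), f x) ∧
    (∑ x ∈ f.support, f x) ≤ t

/-- The weak ε-net property: there is a function `g` bounding the transversal number of
every finite subfamily in terms of its fractional transversal number. -/
def WeakEpsNetProp (S : Set (Set X)) : Prop :=
  ∃ g : ℝ → ℕ, ∀ F : Finset (Set X), ↑F ⊆ S → ∀ t : ℝ,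
    FracTransversalLE F t → (∀ s : ℝ, FracTransversalLE F s → t ≤ s) →
    TransversalLE F (g t)

/-- The `(p,q)`-property: among any `p` members (with repetition allowed) some `q`
of them are intersecting. -/
def PQProperty (F : Finset (Set X)) (p q : ℕ) : Prop :=
  ∀ K : Fin p → Set X, (∀ i, K i ∈ F) →
    ∃ s : Finset (Fin p), s.card = q ∧ ∃ x, ∀ i ∈ s, x ∈ K i

/-- A compact set system: every subsystem with empty total intersection contains a
finite subfamily with empty intersection. -/
def CompactSystem (S : Set (Set X)) : Prop :=
  ∀ T ⊆ S, ⋂₀ T = ∅ → ∃ F : Finset (Set X), ↑F ⊆ T ∧ ⋂₀ (↑F : Set (Set X)) = ∅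

/-- The VC-dimension of `S` is at most `d`: every finite set shattered by `S` has
size at most `d`. -/
def VCDimLE (S : Set (Set X)) (d : ℕ) : Prop :=
  ∀ Y : Finset X, (∀ Z ⊆ Y, ∃ K ∈ S, (↑Y : Set X) ∩ K = ↑Z) → Y.card ≤ d

/-- `S^∩`: all intersections of nonempty subcollections of `S`. -/
def interClosure (S : Set (Set X)) : Set (Set X) :=
  {T | ∃ D ⊆ S, D.Nonempty ∧ T = ⋂₀ D}

end SetSystems

section Hypergraphs

variable {V : Type*} [DecidableEq V]

/-- An independent set of the hypergraph with edge set `E`: contains no edge. -/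
def IsIndep (E : Finset (Finset V)) (I : Set V) : Prop :=
  ∀ e ∈ E, ¬ ((↑e : Set V) ⊆ I)

/-- A maximal independent set. -/
def IsMaxIndep (E : Finset (Finset V)) (I : Set V) : Prop :=
  IsIndep E I ∧ ∀ J : Set V, IsIndep E J → I ⊆ J → J = I

/-- The ground set of the associated convexity space: the maximal independent sets. -/
abbrev MIS (E : Finset (Finset V)) : Type _ := {σ : Set V // IsMaxIndep E σ}

/-- `S_W`: the maximal independent sets containing `W`. -/
def SW (E : Finset (Finset V)) (W : Set V) : Set (MIS E) :=
  {σ : MIS E | W ⊆ σ.1}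

/-- The associated convexity space of the hypergraph with edge set `E`. -/
def assocC (E : Finset (Finset V)) : Set (Set (MIS E)) :=
  {T | ∃ W : Set V, T = SW E W}

/-- Property `T_k(m)`: among any `m` (not necessarily distinct) edges, some `k` of them
admit a system of distinct representatives which is an edge. -/
def PropT (E : Finset (Finset V)) (k m : ℕ) : Prop :=
  ∀ e : Fin m → Finset V, (∀ i, e i ∈ E) →
    ∃ (g : Fin k → Fin m) (v : Fin k → V), StrictMono g ∧ Function.Injective v ∧
      (∀ j, v j ∈ e (g j)) ∧ Finset.image v Finset.univ ∈ E

/-- The chromatic number of the hypergraph is at most `n`: the vertex set can be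
partitioned into (at most) `n` independent sets. -/
def ChromaticLE (E : Finset (Finset V)) (n : ℕ) : Prop :=
  ∃ P : Fin n → Set V, (∀ v : V, ∃! i, v ∈ P i) ∧
    ∀ i, (P i).Nonempty → IsIndep E (P i)

/-- The clique number is at most `w`: every set of vertices all of whose `k`-element
subsets are edges has size at most `w`. -/
def CliqueNumLE (E : Finset (Finset V)) (k w : ℕ) : Prop :=
  ∀ Q : Finset V, (∀ q ⊆ Q, q.card = k → q ∈ E) → Q.card ≤ w

/-- Property `δ_k(m)`: any sunflower of `m` edges contains `k` edges admitting a system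
of distinct representatives which is an edge. -/
def PropDelta (E : Finset (Finset V)) (k m : ℕ) : Prop :=
  ∀ G : Finset (Finset V), G ⊆ E → G.card = m →
    (∃ S : Finset V, ∀ e ∈ G, ∀ e' ∈ G, e ≠ e' → e ∩ e' = S) →
    ∃ (f : Fin k → Finset V) (v : Fin k → V), Function.Injective f ∧ (∀ j, f j ∈ G) ∧
      Function.Injective v ∧ (∀ j, v j ∈ f j) ∧ Finset.image v Finset.univ ∈ E

end Hypergraphs

/-!
If `A ∪ B = Y` is not a Radon partition, then `⋂ A ∪ ⋂ B` extends to no maximal independent set, so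
it contains an edge. Label the elements of `Y` by subsets of `Fin m` so that every pattern on every
`k` coordinates occurs, and apply this, for each `i`, to the splitting of `Y` by whether the label
contains `i`. Property `T_k(m)` yields an edge with one vertex from each of `k` of the resulting
edges. Each of these vertices lies in all elements of `Y` on one side of its splitting, so an
element of `Y` whose label chooses all these sides contains the whole edge: a contradiction.
-/

section FamiliesOfSets

variable {α β ι κ : Type*}

theorem exists_surjOn_of_card_le [Nonempty β] {s : Finset α} {t : Finset β}
    (h : t.card ≤ s.card) : ∃ f : α → β, Set.SurjOn f s t := by
  have ⟨φ⟩ : Nonempty (t ↪ s) := Function.Embedding.nonempty_of_card_le (by simpa using h)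
  have hφ : Function.Injective fun b => (φ b : α) := Subtype.val_injective.comp φ.injective
  exact ⟨Function.extend (fun b => (φ b : α)) Subtype.val fun _ => Classical.arbitrary β,
    fun b hb => ⟨φ ⟨b, hb⟩, (φ ⟨b, hb⟩).2, hφ.extend_apply _ _ ⟨b, hb⟩⟩⟩

variable [DecidableEq ι]

theorem exists_mem_forall_mem_iff_of_shatters_image [Fintype κ] {𝒜 : Finset (Finset ι)}
    {g : κ → ι} (hg : Function.Injective g) (h𝒜 : 𝒜.Shatters (Finset.univ.image g))
    (p : κ → Prop) : ∃ A ∈ 𝒜, ∀ j, g j ∈ A ↔ p j := by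
  obtain ⟨A, hA, hinter⟩ :=
    h𝒜 (Finset.image_subset_image (Finset.filter_subset p Finset.univ))
  refine ⟨A, hA, fun j => ?_⟩
  have hj := Finset.ext_iff.1 hinter (g j)
  simpa [hg.eq_iff] using hj

theorem exists_card_le_forall_shatters (ι : Type*) [Fintype ι] [DecidableEq ι] (k : ℕ) :
    ∃ 𝒜 : Finset (Finset ι), 𝒜.card ≤ (Fintype.card ι).choose k * 2 ^ k ∧
      ∀ S : Finset ι, S.card = k → 𝒜.Shatters S := by
  refine ⟨(Finset.powersetCard k Finset.univ).biUnion Finset.powerset, ?_, fun S hS => ?_⟩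
  · rw [← Finset.card_univ, ← Finset.card_powersetCard]
    refine Finset.card_biUnion_le_card_mul _ _ _ fun S hS => ?_
    rw [Finset.card_powerset, (Finset.mem_powersetCard.1 hS).2]
  · exact Finset.shatters_of_forall_subset fun T hT => Finset.mem_biUnion.2
      ⟨S, Finset.mem_powersetCard_univ.2 hS, Finset.mem_powerset.2 hT⟩

end FamiliesOfSets

section AssociatedConvexitySpace

variable {V : Type*} {E : Finset (Finset V)}

theorem IsIndep.mono {I J : Set V} (hJ : IsIndep E J) (hIJ : I ⊆ J) : IsIndep E I :=
  fun e he heI => hJ e he (heI.trans hIJ)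

theorem IsIndep.sUnion_of_isChain {c : Set (Set V)} (hc : ∀ I ∈ c, IsIndep E I)
    (hchain : IsChain (· ⊆ ·) c) (hne : c.Nonempty) : IsIndep E (⋃₀ c) := fun e he hsub =>
  have ⟨I, hI, heI⟩ := hchain.directedOn.exists_mem_subset_of_finite_of_subset_sUnion hne
    e.finite_toSet hsub
  hc I hI e he heI

theorem IsIndep.exists_isMaxIndep_superset {I : Set V} (hI : IsIndep E I) :
    ∃ J, I ⊆ J ∧ IsMaxIndep E J := by
  obtain ⟨J, hIJ, hJ⟩ := zorn_subset_nonempty {J : Set V | IsIndep E J}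
    (fun c hc hchain hne => ⟨⋃₀ c, IsIndep.sUnion_of_isChain hc hchain hne,
      fun _ => Set.subset_sUnion_of_mem⟩) I hI
  exact ⟨J, hIJ, hJ.prop, fun K hK hJK => (hJ.eq_of_subset hK hJK).symm⟩

theorem mem_convHull_assocC_iff {A : Set (MIS E)} {τ : MIS E} :
    τ ∈ convHull (assocC E) A ↔ ⋂ σ ∈ A, σ.1 ⊆ τ.1 := by
  constructor
  · exact fun hτ => hτ _ ⟨⟨_, rfl⟩, fun _ hσ => Set.biInter_subset_of_mem hσ⟩
  · rintro hτ _ ⟨⟨W, rfl⟩, hA⟩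
    exact (Set.subset_iInter₂ hA).trans hτ

theorem convHull_inter_convHull_nonempty_iff {A B : Set (MIS E)} :
    (convHull (assocC E) A ∩ convHull (assocC E) B).Nonempty ↔
      IsIndep E ((⋂ σ ∈ A, σ.1) ∪ ⋂ σ ∈ B, σ.1) := by
  simp only [Set.Nonempty, Set.mem_inter_iff, mem_convHull_assocC_iff, ← Set.union_subset_iff]
  constructor
  · rintro ⟨τ, hτ⟩
    exact τ.2.1.mono hτ
  · intro h
    obtain ⟨J, hJ, hmax⟩ := h.exists_isMaxIndep_superset
    exact ⟨⟨J, hmax⟩, hJ⟩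

theorem exists_edge_of_not_hasRadonPartition {Y : Finset (MIS E)}
    (hY : ¬ HasRadonPartition (assocC E) Y) (p : MIS E → Prop) :
    ∃ e ∈ E, ∀ v ∈ e, (∀ σ ∈ Y, p σ → v ∈ σ.1) ∨ (∀ σ ∈ Y, ¬ p σ → v ∈ σ.1) := by
  have hdep : ¬ IsIndep E
      ((⋂ σ ∈ (Y.filter p : Set (MIS E)), σ.1) ∪
        ⋂ σ ∈ (Y.filter (¬ p ·) : Set (MIS E)), σ.1) := by
    rw [← convHull_inter_convHull_nonempty_iff]
    refine fun hmeet => hY ⟨_, _, ?_, ?_, hmeet⟩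
    · rw [← Finset.coe_union, Finset.filter_union_filter_not_eq]
    · exact Finset.disjoint_coe.2 (Finset.disjoint_filter_filter_not Y Y p)
  obtain ⟨e, he, hsub⟩ := by simpa only [IsIndep, not_forall, not_not, exists_prop] using hdep
  exact ⟨e, he, fun v hv => by simpa [-Subtype.forall] using hsub hv⟩

variable [DecidableEq V]

theorem PropT.radonLE_card_of_shatters {k m : ℕ} (hT : PropT E k m) {𝒜 : Finset (Finset (Fin m))}
    (h𝒜 : ∀ S : Finset (Fin m), S.card = k → 𝒜.Shatters S) : RadonLE (assocC E) 𝒜.card := by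
  intro Y hcard
  by_contra hY
  obtain ⟨label, hlabel⟩ := exists_surjOn_of_card_le hcard
  choose e he hsides using fun i => exists_edge_of_not_hasRadonPartition hY (i ∈ label ·)
  obtain ⟨g, v, hg, -, hve, hvE⟩ := hT e he
  have hshatters : 𝒜.Shatters (Finset.univ.image g) :=
    h𝒜 _ (by rw [Finset.card_image_of_injective _ hg.injective, Finset.card_fin])
  obtain ⟨A, hA, hpattern⟩ := exists_mem_forall_mem_iff_of_shatters_image hg.injective hshatters
    fun j => ∀ σ ∈ Y, g j ∈ label σ → v j ∈ σ.1
  obtain ⟨σ, hσ, rfl⟩ := hlabel hA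
  have hvσ : ∀ j, v j ∈ σ.1 := fun j => by
    by_cases hj : g j ∈ label σ
    · exact (hpattern j).1 hj σ hσ hj
    · exact (hsides (g j) (v j) (hve j)).resolve_left (mt (hpattern j).2 hj) σ hσ hj
  exact σ.2.1 _ hvE (by simpa [Set.range_subset_iff] using hvσ)

theorem radon_bound_of_propT_general {k m : ℕ} (hT : PropT E k m) :
    RadonLE (assocC E) (m.choose k * 2 ^ k) := by
  obtain ⟨𝒜, hcard, h𝒜⟩ := exists_card_le_forall_shatters (Fin m) k
  rw [Fintype.card_fin] at hcard
  exact fun Y hY => hT.radonLE_card_of_shatters h𝒜 Y (hcard.trans hY)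

end AssociatedConvexitySpace

/-- If a `k`-uniform hypergraph has property `T_k(m)`, then the Radon number
of its associated convexity space is at most `binom(m,k) * 2 ^ k`: every subset of that size
admits a Radon partition. -/
theorem radon_bound_of_propT {V : Type u} [Fintype V] [DecidableEq V] (m k : ℕ)
    (hk : 2 ≤ k) (hkm : k ≤ m) (E : Finset (Finset V))
    (hunif : ∀ e ∈ E, e.card = k) (hne : E.Nonempty) (hT : PropT E k m) :
    ∀ Y : Finset (MIS E), Y.card = m.choose k * 2 ^ k →
      HasRadonPartition (assocC E) Y :=
  fun Y hY => radon_bound_of_propT_general hT Y hY.ge
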